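/- Let μ and ω be positive integers, let G be a finite simple graph with clique number at most ω, let (T, β) be a tree decomposition of G with μ(T, β) ≤ μ, let x be a node of T, and let D ⊆ β(x). Suppose that for each d ∈ D there is a vertex v_d ∈ V(G) \ D adjacent to d with N(v_d) ∩ D = {d}. Then |D| < R(ω+1, ω+1, μ+1). -/

import Mathlib

open SimpleGraph

/-- A tree decomposition of a (finite, simple) graph `G`: a finite tree `T` together with
bags `bag x ⊆ V` such that every vertex is in a bag, every edge is inside some bag, and for
every vertex the set of nodes whose bag contains it induces a connected subtree of `T`. -/
structure TreeDecomp {V : Type} (G : SimpleGraph V) where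
  ι : Type
  fintype_ι : Fintype ι
  T : SimpleGraph ι
  isTree : T.IsTree
  bag : ι → Set V
  mem_bag : ∀ v : V, ∃ x : ι, v ∈ bag x
  edge_bag : ∀ ⦃u v : V⦄, G.Adj u v → ∃ x : ι, u ∈ bag x ∧ v ∈ bag x
  bag_conn : ∀ v : V, (T.induce {x : ι | v ∈ bag x}).Connected

/-- `a`, `b` enumerate the endpoints of an induced matching of size `n` in `G`:
the edges `a i — b i` are present, and endpoints of distinct edges are pairwise distinct
and non-adjacent. -/
def IsIndMatching {V : Type} (G : SimpleGraph V) {n : ℕ} (a b : Fin n → V) : Prop :=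
  (∀ i, G.Adj (a i) (b i)) ∧
  ∀ i j : Fin n, i ≠ j →
    a i ≠ a j ∧ a i ≠ b j ∧ b i ≠ a j ∧ b i ≠ b j ∧
    ¬ G.Adj (a i) (a j) ∧ ¬ G.Adj (a i) (b j) ∧ ¬ G.Adj (b i) (a j) ∧ ¬ G.Adj (b i) (b j)

/-- `μ(T,β) ≤ μ`: every induced matching touching a bag of the decomposition has size at
most `μ`. -/
def TreeDecomp.MuLE {V : Type} {G : SimpleGraph V} (td : TreeDecomp G) (μ : ℕ) : Prop :=
  ∀ (x : td.ι) (n : ℕ) (a b : Fin n → V),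
    IsIndMatching G a b → (∀ i, a i ∈ td.bag x ∨ b i ∈ td.bag x) → n ≤ μ

/-- `α(T,β) ≤ k`: every independent set contained in a single bag has size at most `k`. -/
def TreeDecomp.AlphaLE {V : Type} {G : SimpleGraph V} (td : TreeDecomp G) (k : ℕ) : Prop :=
  ∀ (x : td.ι) (I : Finset V), ↑I ⊆ td.bag x →
    ((I : Set V)).Pairwise (fun u v => ¬ G.Adj u v) → I.card ≤ k

/-- The induced matching treewidth `tree-μ(G)`: the least `n` admitting a tree decomposition
with `μ(T,β) ≤ n`. -/
noncomputable def treeMu {V : Type} (G : SimpleGraph V) : ℕ :=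
  sInf {n | ∃ td : TreeDecomp G, td.MuLE n}

/-- The tree-independence number `tree-α(G)`: the least `n` admitting a tree decomposition
with `α(T,β) ≤ n`. -/
noncomputable def treeAlpha {V : Type} (G : SimpleGraph V) : ℕ :=
  sInf {n | ∃ td : TreeDecomp G, td.AlphaLE n}

/-- `n` is large enough for the multicolour Ramsey property with target sizes `t`:
every `k`-colouring of the edges of the complete graph on `n` vertices admits, for some
colour `i`, a set of `t i` vertices all of whose connecting edges have colour `i`. -/
def RamseyProp (n : ℕ) {k : ℕ} (t : Fin k → ℕ) : Prop :=
  ∀ c : Sym2 (Fin n) → Fin k, ∃ (i : Fin k) (m : Finset (Fin n)),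
    m.card = t i ∧ ∀ x ∈ m, ∀ y ∈ m, x ≠ y → c s(x, y) = i

/-- The three-colour Ramsey number `R(t₁, t₂, t₃)`. -/
noncomputable def ramsey3 (t₁ t₂ t₃ : ℕ) : ℕ := sInf {n | RamseyProp n ![t₁, t₂, t₃]}

/-!
Let `R` be the Ramsey number, suppose `R ≤ |D|`, and choose a private neighbour `f d` of every
`d ∈ D`. Colour the pair `{d, d'}` by whether `d` and `d'` are adjacent, `f d` and `f d'` are
adjacent, or neither. A monochromatic set in one of the first two colours gives a clique inside
`D`, respectively among the private neighbours. For a monochromatic set in the third colour, the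
edges `d — f d` form an induced matching, because `f d` is not adjacent to any other element of `D`.
-/

section Ramsey

variable {α : Type*} {k n : ℕ}

/-- `m` is monochromatic of colour `i` for the edge colouring `c`: all pairs of distinct elements
of `m` have colour `i`. This is the kind of set a Ramsey argument produces; the colour of the loops
`s(x, x)` is ignored. -/
def IsMonochromatic {κ : Type*} (c : Sym2 α → κ) (i : κ) (m : Finset α) : Prop :=
  (m : Set α).Pairwise fun x y => c s(x, y) = i

protected theorem IsMonochromatic.insert {κ : Type*} [DecidableEq α] {c : Sym2 α → κ} {i : κ}
    {m : Finset α} {v : α} (hm : IsMonochromatic c i m) (hv : ∀ w ∈ m, c s(v, w) = i) :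
    IsMonochromatic c i (insert v m) := by
  rw [IsMonochromatic, Finset.coe_insert]
  exact Set.Pairwise.insert hm fun w hw _ => ⟨hv w hw, Sym2.eq_swap ▸ hv w hw⟩

theorem RamseyProp.exists_isMonochromatic {t : Fin k → ℕ} (h : RamseyProp n t) {S : Finset α}
    (hS : n ≤ S.card) (c : Sym2 α → Fin k) :
    ∃ i, ∃ m ⊆ S, m.card = t i ∧ IsMonochromatic c i m := by
  obtain ⟨f⟩ : Nonempty (Fin n ↪ S) := Function.Embedding.nonempty_of_card_le (by simpa using hS)
  let g : Fin n ↪ α := f.trans (Function.Embedding.subtype _)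
  obtain ⟨i, m, hcard, hmono⟩ := h fun e => c (e.map g)
  refine ⟨i, m.map g, ?_, by rw [Finset.card_map, hcard], ?_⟩
  · exact Finset.map_subset_iff_subset_preimage.mpr fun x _ => by simp [g]
  · rw [IsMonochromatic, Finset.coe_map, Set.InjOn.pairwise_image g.injective.injOn]
    exact fun x hx y hy => hmono x hx y hy

theorem exists_le_card_filter_eq_of_sum_le_card {κ : Type*} [Fintype κ] [Nonempty κ]
    [DecidableEq κ] (S : Finset α) (f : α → κ) {N : κ → ℕ} (hS : ∑ i, N i ≤ S.card) :
    ∃ i, N i ≤ (S.filter fun x => f x = i).card := by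
  rw [Finset.card_eq_sum_card_fiberwise (f := f) (t := Finset.univ) fun _ _ => by simp] at hS
  simpa using Finset.exists_le_of_sum_le Finset.univ_nonempty hS

theorem RamseyProp.of_update_pred {t N : Fin k → ℕ} (ht : ∀ i, 0 < t i)
    (hN : ∀ i, RamseyProp (N i) (Function.update t i (t i - 1))) :
    RamseyProp (∑ i, N i + 1) t := by
  intro c
  let v := Fin.last (∑ i, N i)
  have : Nonempty (Fin k) := ⟨c s(v, v)⟩
  obtain ⟨i, hi⟩ : ∃ i, N i ≤ ((Finset.univ.erase v).filter fun w => c s(v, w) = i).card :=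
    exists_le_card_filter_eq_of_sum_le_card _ _ (by simp)
  obtain ⟨j, m, hmS, hcard, hmono⟩ := (hN i).exists_isMonochromatic hi c
  by_cases hji : j = i
  · subst hji
    have hvm : v ∉ m := fun hv => by simpa using hmS hv
    have hcol : ∀ w ∈ m, c s(v, w) = j := fun w hw => (Finset.mem_filter.mp (hmS hw)).2
    refine ⟨j, insert v m, ?_, fun x hx y hy => (hmono.insert hcol) hx hy⟩
    rw [Finset.card_insert_of_notMem hvm, hcard, Function.update_self, Nat.sub_add_cancel (ht j)]
  · rw [Function.update_of_ne hji] at hcard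
    exact ⟨j, m, hcard, fun x hx y hy => hmono hx hy⟩

theorem exists_ramseyProp (t : Fin k → ℕ) : ∃ n, RamseyProp n t := by
  induction t using WellFoundedLT.induction with
  | ind t ih =>
    by_cases ht : ∀ i, 0 < t i
    · have hlt (i : Fin k) : Function.update t i (t i - 1) < t :=
        update_lt_self_iff.mpr (Nat.sub_lt (ht i) one_pos)
      choose N hN using fun i => ih _ (hlt i)
      exact ⟨_, RamseyProp.of_update_pred ht hN⟩
    · obtain ⟨i, hi⟩ : ∃ i, t i = 0 := by simpa using ht
      exact ⟨0, fun _ => ⟨i, ∅, by simp [hi], by simp⟩⟩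

theorem ramseyProp_ramsey3 (p q r : ℕ) : RamseyProp (ramsey3 p q r) ![p, q, r] :=
  Nat.sInf_mem (exists_ramseyProp ![p, q, r])

theorem RamseyProp.exists_isNClique_or_isNIndepSet {p q r : ℕ} (h : RamseyProp n ![p, q, r])
    (G H : SimpleGraph α) {S : Finset α} (hS : n ≤ S.card) :
    (∃ m ⊆ S, G.IsNClique p m) ∨ (∃ m ⊆ S, H.IsNClique q m) ∨
      ∃ m ⊆ S, (G ⊔ H).IsNIndepSet r m := by
  classical
  let c : Sym2 α → Fin 3 := fun e => if e ∈ G.edgeSet then 0 else if e ∈ H.edgeSet then 1 else 2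
  obtain ⟨i, m, hmS, hcard, hmono⟩ := h.exists_isMonochromatic hS c
  fin_cases i
  · refine .inl ⟨m, hmS, fun x hx y hy hxy => ?_, hcard⟩
    have hc : c s(x, y) = 0 := hmono hx hy hxy
    grind [mem_edgeSet]
  · refine .inr (.inl ⟨m, hmS, fun x hx y hy hxy => ?_, hcard⟩)
    have hc : c s(x, y) = 1 := hmono hx hy hxy
    grind [mem_edgeSet]
  · refine .inr (.inr ⟨m, hmS, fun x hx y hy hxy => ?_, hcard⟩)
    have hc : c s(x, y) = 2 := hmono hx hy hxy
    grind [mem_edgeSet]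

end Ramsey

theorem isNClique_image_of_comap {α β : Type*} [DecidableEq β] {G : SimpleGraph β} {f : α → β}
    {n : ℕ} {s : Finset α} (h : (G.comap f).IsNClique n s) : G.IsNClique n (s.image f) := by
  have hinj : Set.InjOn f s := fun x hx y hy hxy =>
    by_contra fun hne => G.ne_of_adj (h.isClique hx hy hne) hxy
  refine ⟨?_, by rw [Finset.card_image_of_injOn hinj, h.card_eq]⟩
  rw [Finset.coe_image, IsClique, hinj.pairwise_image]
  exact h.isClique

/-- `v` is a private neighbour of `d` with respect to `D`: it lies outside `D` and `d` is its only
neighbour in `D`. Matching each `d` to a private neighbour is the source of the induced matchings;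
the adjacency of `d` and `v` is contained in the equation `N(v) ∩ D = {d}`. -/
def IsPrivateNeighbor {V : Type*} (G : SimpleGraph V) (D : Set V) (d v : V) : Prop :=
  v ∉ D ∧ G.neighborSet v ∩ D = {d}

namespace IsPrivateNeighbor

variable {V : Type*} {G : SimpleGraph V} {D : Set V} {d d' v : V}

theorem mem (h : IsPrivateNeighbor G D d v) : d ∈ D :=
  (h.2.ge rfl).2

theorem adj (h : IsPrivateNeighbor G D d v) : G.Adj d v :=
  (h.2.ge rfl).1.symm

theorem eq_of_adj (h : IsPrivateNeighbor G D d v) (hd' : d' ∈ D) (hadj : G.Adj d' v) : d' = d :=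
  h.2.le ⟨hadj.symm, hd'⟩

end IsPrivateNeighbor

theorem isIndMatching_of_isPrivateNeighbor {V : Type} {G : SimpleGraph V} {D : Set V} {n : ℕ}
    {a b : Fin n → V} (ha : Function.Injective a) (hab : ∀ i, IsPrivateNeighbor G D (a i) (b i))
    (hindep : Pairwise fun i j => ¬ G.Adj (a i) (a j) ∧ ¬ G.Adj (b i) (b j)) :
    IsIndMatching G a b := by
  have hne (i j) : a i ≠ b j := fun h => (hab j).1 (h ▸ (hab i).mem)
  have hnadj {i j} (hij : i ≠ j) : ¬ G.Adj (a i) (b j) := fun h =>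
    hij (ha ((hab j).eq_of_adj (hab i).mem h))
  have hb {i j} (hij : i ≠ j) : b i ≠ b j := fun h => hnadj hij (h ▸ (hab i).adj)
  exact ⟨fun i => (hab i).adj, fun i j hij => ⟨ha.ne hij, hne i j, (hne j i).symm, hb hij,
    (hindep hij).1, hnadj hij, fun h => hnadj hij.symm h.symm, (hindep hij).2⟩⟩

theorem exists_isIndMatching_of_isNIndepSet {V : Type} {G : SimpleGraph V} {D : Set V} {f : V → V}
    {r : ℕ} {m : Finset V} (hf : ∀ d ∈ m, IsPrivateNeighbor G D d (f d))
    (hm : (G ⊔ G.comap f).IsNIndepSet r m) :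
    ∃ a b : Fin r → V, IsIndMatching G a b ∧ ∀ i, a i ∈ D := by
  let e : Fin r ≃ m := (m.equivFinOfCardEq hm.card_eq).symm
  have he : Function.Injective fun i => (e i : V) := Subtype.val_injective.comp e.injective
  have hpriv (i) : IsPrivateNeighbor G D (e i) (f (e i)) := hf _ (e i).2
  refine ⟨fun i => e i, fun i => f (e i), ?_, fun i => (hpriv i).mem⟩
  refine isIndMatching_of_isPrivateNeighbor he hpriv fun i j hij => ?_
  simpa using hm.isIndepSet (e i).2 (e j).2 (he.ne hij)

theorem stmt10_general {V : Type} {G : SimpleGraph V} {p q r : ℕ} {D : Finset V}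
    (hD : G.CliqueFreeOn D p) (hDc : G.CliqueFreeOn (↑D)ᶜ q)
    (hr : ∀ a b : Fin r → V, IsIndMatching G a b → ¬ ∀ i, a i ∈ D)
    (hpriv : ∀ d ∈ D, ∃ v, IsPrivateNeighbor G D d v) :
    D.card < ramsey3 p q r := by
  classical
  by_contra! hcard
  choose! f hf using hpriv
  rcases (ramseyProp_ramsey3 p q r).exists_isNClique_or_isNIndepSet G (G.comap f) hcard with
    ⟨m, hmD, hm⟩ | ⟨m, hmD, hm⟩ | ⟨m, hmD, hm⟩
  · exact hD (Finset.coe_subset.mpr hmD) hm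
  · have himage : ((m.image f : Finset V) : Set V) ⊆ (↑D)ᶜ := by
      rw [Finset.coe_image]
      exact Set.image_subset_iff.mpr fun d hd => (hf d (hmD hd)).1
    exact hDc himage (isNClique_image_of_comap hm)
  · obtain ⟨a, b, hab, ha⟩ := exists_isIndMatching_of_isNIndepSet (fun d hd => hf d (hmD hd)) hm
    exact hr a b hab ha

/-- Let `G` be a finite graph with clique number at most `ω`, `(T, β)` a tree decomposition
with `μ(T,β) ≤ μ`, `x` a node, and `D ⊆ β(x)`. If every `d ∈ D` has a private neighbour
`v` outside `D` (i.e. `v` adjacent to `d` with `N(v) ∩ D = {d}`), then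
`|D| < R(ω+1, ω+1, μ+1)`. -/
theorem stmt10 (μ ω : ℕ) (hμ : 0 < μ) (hω : 0 < ω) (V : Type) [Fintype V]
    (G : SimpleGraph V) (hclique : G.CliqueFree (ω + 1))
    (td : TreeDecomp G) (htd : td.MuLE μ)
    (x : td.ι) (D : Finset V) (hD : ↑D ⊆ td.bag x)
    (hpriv : ∀ d ∈ D, ∃ v : V, v ∉ D ∧ G.Adj d v ∧ G.neighborSet v ∩ ↑D = {d}) :
    D.card < ramsey3 (ω + 1) (ω + 1) (μ + 1) := by
  exact stmt10_general hclique.cliqueFreeOn hclique.cliqueFreeOn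
    (fun a b hab ha => Nat.not_succ_le_self μ (htd x _ a b hab fun i => .inl (hD (ha i))))
    fun d hd => (hpriv d hd).imp fun _ hv => ⟨hv.1, hv.2.2⟩
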